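/- Fix δ ≥ 0, a symbol a of order 0, the bump β, and α ∈ (−1,1)∖{0}. For j ≥ 1, r₁, r₂ > 0 and θ₁, θ₂ ∈ [0,2π) set ψ₃(s) = (2^{−j}+d_s)^{−3/2−δ} a(2^j d_s) · [sin(θ₁−θ₂+π) cosh(αs)] / [cosh s − cos(θ₁−θ₂+π)], ψ_{3,m}(s) = (r₁+r₂)^{−3/2−δ} a(2^j(r₁+r₂)) · sin(θ₁−θ₂+π) / (s²/2 + 2 sin²((θ₁−θ₂+π)/2)), and ψ_{3,e} = ψ₃ − ψ_{3,m}, and define K̃^{3,j}_{D,e}(r₁,r₂;θ₁−θ₂) = 2^{−j(3/2+δ)} β(r₁+r₂) ∫₀^∞ e^{i 2^j d_s} ψ_{3,e}(s) ds. Then there is a constant C, independent of j, r₁, r₂, θ₁, θ₂, such that |K̃^{3,j}_{D,e}(r₁,r₂;θ₁−θ₂)| ≤ C 2^{−j(3/2+δ)} (1 + 2^j r₁ r₂)^{−1/2} for all j ≥ 1. -/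

import Mathlib

open MeasureTheory Real Set

noncomputable section

/-- `d_s(r₁, r₂) = √(r₁² + r₂² + 2 r₁ r₂ cosh s)`. -/
def dS (r₁ r₂ s : ℝ) : ℝ := Real.sqrt (r₁ ^ 2 + r₂ ^ 2 + 2 * r₁ * r₂ * Real.cosh s)

/-- A symbol of order `0` on `(0, ∞)`. -/
def IsSymbol0 (a : ℝ → ℂ) : Prop :=
  ContDiffOn ℝ (⊤ : ℕ∞) a (Set.Ioi 0) ∧ (∃ M : ℝ, ∀ r > (0 : ℝ), ‖a r‖ ≤ M) ∧
    ∀ N : ℕ, ∃ C : ℝ, ∀ r > (0 : ℝ),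
      ‖iteratedDerivWithin N a (Set.Ioi 0) r‖ ≤ C * r ^ (-(N : ℝ))

/-- `ψ₃(s)`, with `φ = θ₁ - θ₂`. -/
def psi3 (δ α : ℝ) (a : ℝ → ℂ) (j : ℕ) (r₁ r₂ φ s : ℝ) : ℂ :=
  ((((2 : ℝ) ^ (-(j : ℝ)) + dS r₁ r₂ s) ^ (-(3 / 2 + δ)) : ℝ) : ℂ) *
    a ((2 : ℝ) ^ (j : ℝ) * dS r₁ r₂ s) *
    ((Real.sin (φ + Real.pi) * Real.cosh (α * s) /
        (Real.cosh s - Real.cos (φ + Real.pi)) : ℝ) : ℂ)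

/-- `ψ_{3,m}(s)`, with `φ = θ₁ - θ₂`. -/
def psi3m (δ : ℝ) (a : ℝ → ℂ) (j : ℕ) (r₁ r₂ φ s : ℝ) : ℂ :=
  (((r₁ + r₂) ^ (-(3 / 2 + δ)) : ℝ) : ℂ) * a ((2 : ℝ) ^ (j : ℝ) * (r₁ + r₂)) *
    ((Real.sin (φ + Real.pi) /
        (s ^ 2 / 2 + 2 * Real.sin ((φ + Real.pi) / 2) ^ 2) : ℝ) : ℂ)

/-- The kernel `K̃^{3,j}_{D,e}` built from `ψ_{3,e} = ψ₃ - ψ_{3,m}`. -/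
def Ktil3e (δ α : ℝ) (a : ℝ → ℂ) (β : ℝ → ℝ) (j : ℕ) (r₁ r₂ φ : ℝ) : ℂ :=
  (((2 : ℝ) ^ (-(j : ℝ) * (3 / 2 + δ)) : ℝ) : ℂ) * ((β (r₁ + r₂) : ℝ) : ℂ) *
    ∫ s in Set.Ioi (0 : ℝ),
      Complex.exp (Complex.I * (((2 : ℝ) ^ (j : ℝ) * dS r₁ r₂ s : ℝ) : ℂ)) *
        (psi3 δ α a j r₁ r₂ φ s - psi3m δ a j r₁ r₂ φ s)

/-!
With `ϑ = φ + π` and `B = 1 - cos ϑ = 2 sin² (ϑ / 2)`, split `ψ_{3,e}` into two pieces.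

* The first is `sin ϑ` times a difference in which the singularities of `1 / (cosh s - 1 + B)` and
  `1 / (s² / 2 + B)` cancel, uniformly in `B`: it is `O((1 + s²)⁻¹)` with derivative `O(s⁻¹)`,
  where `|α| < 1` provides the decay. Since `∂ₛ d_s = r₁ r₂ sinh s / d_s`, an integration by parts
  on `s > ε` against the phase `λ d_s`, `λ = 2^j`, costs `(λ r₁ r₂ ε)⁻¹`, while `s ≤ ε` contributes
  `O(ε)`; the choice `ε = (1 + λ r₁ r₂)^(-1/2)` balances the two.
* The second is the Poisson kernel `sin ϑ / (s² / 2 + B)`, whose `L¹` norm is at most `π`, times the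
  error `O(λ⁻¹)` made by dropping `λ⁻¹` from the weight `(λ⁻¹ + r₁ + r₂)^(-3/2-δ)`. As `r₁ + r₂` is
  bounded, `λ⁻¹ = O((1 + λ r₁ r₂)^(-1/2))`.
-/

section Hyperbolic

lemma cosh_sub_one (s : ℝ) : cosh s - 1 = 2 * sinh (s / 2) ^ 2 := by
  have hdouble := cosh_two_mul (s / 2)
  rw [mul_div_cancel₀ s two_ne_zero, cosh_sq] at hdouble
  linarith

lemma sinh_eq_two_mul_sinh_half_mul_cosh_half (s : ℝ) :
    sinh s = 2 * sinh (s / 2) * cosh (s / 2) := by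
  rw [← sinh_two_mul, mul_div_cancel₀ s two_ne_zero]

lemma sq_le_sinh_sq (t : ℝ) : t ^ 2 ≤ sinh t ^ 2 := by
  rw [sq_le_sq, abs_sinh]
  exact self_le_sinh_iff.2 (abs_nonneg t)

lemma sq_div_two_le_cosh_sub_one (s : ℝ) : s ^ 2 / 2 ≤ cosh s - 1 := by
  rw [cosh_sub_one]
  linarith [sq_le_sinh_sq (s / 2)]

lemma sq_mul_one_add_sq_div_four_le_sinh_sq (t : ℝ) : t ^ 2 * (1 + t ^ 2 / 4) ≤ sinh t ^ 2 := by
  have hhalf := sq_le_sinh_sq (t / 2)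
  have hsinh : sinh t ^ 2 = 4 * sinh (t / 2) ^ 2 * (1 + sinh (t / 2) ^ 2) := by
    rw [sinh_eq_two_mul_sinh_half_mul_cosh_half, mul_pow, mul_pow, cosh_sq']
    ring
  rw [hsinh]
  nlinarith [sq_nonneg (sinh (t / 2))]

lemma abs_sinh_le_abs_mul_cosh (t : ℝ) : |sinh t| ≤ |t| * cosh t := by
  wlog ht : 0 ≤ t generalizing t
  · simpa using this (-t) (by linarith)
  rw [abs_of_nonneg ht, abs_of_nonneg (sinh_nonneg_iff.2 ht)]
  have hmono : MonotoneOn (fun t ↦ t * cosh t - sinh t) (Ici 0) := by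
    refine monotoneOn_of_deriv_nonneg (convex_Ici 0) (by fun_prop) (by fun_prop) fun x hx ↦ ?_
    rw [interior_Ici] at hx
    have hderiv : HasDerivAt (fun t ↦ t * cosh t - sinh t) (1 * cosh x + x * sinh x - cosh x) x :=
      ((hasDerivAt_id x).mul (hasDerivAt_cosh x)).sub (hasDerivAt_sinh x)
    rw [hderiv.deriv]
    have := mul_nonneg hx.le (sinh_nonneg_iff.2 hx.le)
    linarith
  have := hmono self_mem_Ici ht ht
  simp only [zero_mul, sinh_zero, sub_zero] at this
  linarith

lemma sinh_sq_sub_sq_le (t : ℝ) : sinh t ^ 2 - t ^ 2 ≤ t ^ 2 * sinh t ^ 2 := by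
  have hsq : sinh t ^ 2 ≤ t ^ 2 * cosh t ^ 2 := by
    rw [← mul_pow, sq_le_sq, abs_mul, abs_of_pos (cosh_pos t)]
    exact abs_sinh_le_abs_mul_cosh t
  rw [cosh_sq'] at hsq
  linarith

lemma cosh_sub_taylor_mul_le (s : ℝ) :
    (cosh s - 1 - s ^ 2 / 2) * (1 + s ^ 2 / 4) ≤ s ^ 2 / 2 * (cosh s - 1) := by
  have hhalf := sinh_sq_sub_sq_le (s / 2)
  rw [cosh_sub_one]
  nlinarith [sq_nonneg (sinh (s / 2)), sq_nonneg (s ^ 2)]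

lemma mul_cosh_le_add_one_mul_sinh {t : ℝ} (ht : 0 ≤ t) : t * cosh t ≤ (t + 1) * sinh t := by
  have hexp : exp (-t) ≤ 1 := exp_le_one_iff.2 (by linarith)
  nlinarith [cosh_sub_sinh t, self_le_sinh_iff.2 ht]

lemma mul_sinh_le_add_two_mul_cosh_sub_one {s : ℝ} (hs : 0 ≤ s) :
    s * sinh s ≤ (s + 2) * (cosh s - 1) := by
  have ht : 0 ≤ s / 2 := by positivity
  have hhalf := mul_cosh_le_add_one_mul_sinh ht
  rw [cosh_sub_one, sinh_eq_two_mul_sinh_half_mul_cosh_half]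
  nlinarith [sinh_nonneg_iff.2 ht]

lemma cosh_mul_mul_sinh_one_sub_abs_mul_le {t : ℝ} (α : ℝ) (ht : 0 ≤ t) :
    cosh (α * t) * sinh ((1 - |α|) * t) ≤ sinh t := by
  have hsplit : sinh t =
      sinh (|α| * t) * cosh ((1 - |α|) * t) + cosh (|α| * t) * sinh ((1 - |α|) * t) := by
    rw [← sinh_add, ← add_mul, add_sub_cancel, one_mul]
  have hcosh : cosh (α * t) = cosh (|α| * t) := by
    rw [← cosh_abs, abs_mul, abs_of_nonneg ht]
  rw [hcosh, hsplit]
  exact le_add_of_nonneg_left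
    (mul_nonneg (sinh_nonneg_iff.2 (mul_nonneg (abs_nonneg α) ht)) (cosh_pos _).le)

lemma one_sub_abs_pow_four_mul_cosh_mul_le {α s : ℝ} (hα : |α| ≤ 1) (hs : 0 ≤ s) :
    (1 - |α|) ^ 4 * (s ^ 2 * (1 + s ^ 2) * cosh (α * s)) ≤ 64 * (cosh s - 1) := by
  set c := 1 - |α|
  set t := s / 2 with ht
  have hc0 : 0 ≤ c := by linarith
  have hc1 : c ≤ 1 := by linarith [abs_nonneg α]
  have ht0 : 0 ≤ t := by positivity
  have hdouble : cosh (α * s) ≤ 2 * cosh (α * t) ^ 2 := by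
    have := cosh_sub_one (α * s)
    rw [show α * s / 2 = α * t by rw [ht]; ring] at this
    linarith [cosh_sq (α * t)]
  have hpoly : c ^ 4 * (s ^ 2 * (1 + s ^ 2)) ≤ 64 * sinh (c * t) ^ 2 := by
    have hc42 : c ^ 4 ≤ c ^ 2 := pow_le_pow_of_le_one hc0 hc1 (by norm_num)
    calc c ^ 4 * (s ^ 2 * (1 + s ^ 2)) = c ^ 4 * s ^ 2 + c ^ 4 * s ^ 4 := by ring
      _ ≤ 16 * c ^ 2 * s ^ 2 + c ^ 4 * s ^ 4 := by nlinarith [sq_nonneg s, sq_nonneg c]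
      _ = 64 * ((c * t) ^ 2 * (1 + (c * t) ^ 2 / 4)) := by rw [ht]; ring
      _ ≤ 64 * sinh (c * t) ^ 2 := by gcongr; exact sq_mul_one_add_sq_div_four_le_sinh_sq _
  calc c ^ 4 * (s ^ 2 * (1 + s ^ 2) * cosh (α * s))
      = c ^ 4 * (s ^ 2 * (1 + s ^ 2)) * cosh (α * s) := by ring
    _ ≤ 64 * sinh (c * t) ^ 2 * (2 * cosh (α * t) ^ 2) := by gcongr
    _ = 64 * (2 * (cosh (α * t) * sinh (c * t)) ^ 2) := by ring
    _ ≤ 64 * (2 * sinh t ^ 2) := by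
      have := sinh_nonneg_iff.2 (mul_nonneg hc0 ht0)
      have := cosh_pos (α * t)
      gcongr
      exact cosh_mul_mul_sinh_one_sub_abs_mul_le α ht0
    _ = 64 * (cosh s - 1) := by rw [cosh_sub_one]

end Hyperbolic

section Distance

variable {r₁ r₂ s : ℝ}

@[fun_prop]
lemma continuous_dS (r₁ r₂ : ℝ) : Continuous (dS r₁ r₂) := by
  unfold dS
  fun_prop

lemma dS_sq (h₁ : 0 ≤ r₁) (h₂ : 0 ≤ r₂) (s : ℝ) :
    dS r₁ r₂ s ^ 2 = r₁ ^ 2 + r₂ ^ 2 + 2 * r₁ * r₂ * cosh s := by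
  have := cosh_pos s
  exact sq_sqrt (by positivity)

lemma dS_zero (h₁ : 0 ≤ r₁) (h₂ : 0 ≤ r₂) : dS r₁ r₂ 0 = r₁ + r₂ := by
  rw [dS, cosh_zero, show r₁ ^ 2 + r₂ ^ 2 + 2 * r₁ * r₂ * 1 = (r₁ + r₂) ^ 2 by ring,
    sqrt_sq (by positivity)]

lemma add_le_dS (h₁ : 0 ≤ r₁) (h₂ : 0 ≤ r₂) (s : ℝ) : r₁ + r₂ ≤ dS r₁ r₂ s := by
  refine le_sqrt_of_sq_le ?_
  nlinarith [one_le_cosh s, mul_nonneg h₁ h₂]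

lemma dS_pos (h₁ : 0 < r₁) (h₂ : 0 < r₂) (s : ℝ) : 0 < dS r₁ r₂ s :=
  (add_pos h₁ h₂).trans_le (add_le_dS h₁.le h₂.le s)

lemma dS_le_add_mul_cosh_half (h₁ : 0 ≤ r₁) (h₂ : 0 ≤ r₂) (s : ℝ) :
    dS r₁ r₂ s ≤ (r₁ + r₂) * cosh (s / 2) := by
  have := cosh_pos (s / 2)
  refine sqrt_le_iff.2 ⟨by positivity, ?_⟩
  rw [mul_pow, cosh_sq']
  nlinarith [cosh_sub_one s, mul_nonneg (sq_nonneg (r₁ - r₂)) (sq_nonneg (sinh (s / 2)))]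

lemma hasDerivAt_dS (h₁ : 0 < r₁) (h₂ : 0 < r₂) (s : ℝ) :
    HasDerivAt (dS r₁ r₂) (r₁ * r₂ * sinh s / dS r₁ r₂ s) s := by
  have := cosh_pos s
  have hsqrt := (((hasDerivAt_cosh s).const_mul (2 * r₁ * r₂)).const_add
    (r₁ ^ 2 + r₂ ^ 2)).sqrt (by positivity)
  refine hsqrt.congr_deriv ?_
  rw [mul_assoc 2 r₁, mul_assoc 2 (r₁ * r₂), mul_div_mul_left _ _ two_ne_zero, ← mul_assoc 2 r₁]
  rfl

lemma mul_sinh_div_dS_nonneg (h₁ : 0 < r₁) (h₂ : 0 < r₂) (hs : 0 ≤ s) :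
    0 ≤ r₁ * r₂ * sinh s / dS r₁ r₂ s := by
  have := sinh_nonneg_iff.2 hs
  have := dS_pos h₁ h₂ s
  positivity

lemma mul_sinh_div_dS_le_mul_dS (h₁ : 0 < r₁) (h₂ : 0 < r₂) (hs : 0 ≤ s) :
    r₁ * r₂ * sinh s / dS r₁ r₂ s ≤ s * dS r₁ r₂ s := by
  have hsinh : sinh s ≤ s * cosh s := by
    simpa only [abs_of_nonneg hs, abs_of_nonneg (sinh_nonneg_iff.2 hs)] using
      abs_sinh_le_abs_mul_cosh s
  rw [div_le_iff₀ (dS_pos h₁ h₂ s), mul_assoc s, ← sq, dS_sq h₁.le h₂.le]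
  have hprod := mul_pos h₁ h₂
  calc r₁ * r₂ * sinh s ≤ r₁ * r₂ * (s * cosh s) := by gcongr
    _ ≤ s * (2 * r₁ * r₂ * cosh s) := by
      nlinarith [mul_nonneg hprod.le (mul_nonneg hs (cosh_pos s).le)]
    _ ≤ s * (r₁ ^ 2 + r₂ ^ 2 + 2 * r₁ * r₂ * cosh s) := by
      gcongr
      exact le_add_of_nonneg_left (by positivity)

lemma mul_sinh_div_dS_mul_sinh_le (h₁ : 0 < r₁) (h₂ : 0 < r₂) (s : ℝ) :
    r₁ * r₂ * sinh s / dS r₁ r₂ s * sinh s ≤ dS r₁ r₂ s * cosh s := by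
  have hprod := mul_pos h₁ h₂
  have hcosh := one_le_cosh s
  rw [div_mul_eq_mul_div, div_le_iff₀ (dS_pos h₁ h₂ s)]
  calc r₁ * r₂ * sinh s * sinh s = r₁ * r₂ * (cosh s ^ 2 - 1) := by rw [← sinh_sq]; ring
    _ ≤ (r₁ ^ 2 + r₂ ^ 2 + 2 * r₁ * r₂ * cosh s) * cosh s := by
      nlinarith [mul_nonneg (add_nonneg (sq_nonneg r₁) (sq_nonneg r₂)) (zero_le_one.trans hcosh),
        mul_nonneg hprod.le (sq_nonneg (cosh s))]
    _ = dS r₁ r₂ s * cosh s * dS r₁ r₂ s := by rw [← dS_sq h₁.le h₂.le]; ring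

lemma dS_div_sinh_le (h₁ : 0 < r₁) (h₂ : 0 < r₂) (hs : 0 < s) :
    dS r₁ r₂ s / sinh s ≤ (r₁ + r₂) / s := by
  have := add_pos h₁ h₂
  have := cosh_pos (s / 2)
  have hsinh : s / 2 ≤ sinh (s / 2) := self_le_sinh_iff.2 (half_pos hs).le
  rw [div_le_div_iff₀ (sinh_pos_iff.2 hs) hs]
  calc dS r₁ r₂ s * s ≤ (r₁ + r₂) * cosh (s / 2) * (2 * sinh (s / 2)) := by
        gcongr
        · exact dS_le_add_mul_cosh_half h₁.le h₂.le s
        · linarith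
    _ = (r₁ + r₂) * sinh s := by
      rw [sinh_eq_two_mul_sinh_half_mul_cosh_half s]
      ring

lemma hasDerivAt_dS_div_sinh (h₁ : 0 < r₁) (h₂ : 0 < r₂) (hs : 0 < s) :
    HasDerivAt (fun s ↦ dS r₁ r₂ s / sinh s)
      ((r₁ * r₂ * sinh s / dS r₁ r₂ s * sinh s - dS r₁ r₂ s * cosh s) / sinh s ^ 2) s :=
  (hasDerivAt_dS h₁ h₂ s).div (hasDerivAt_sinh s) (sinh_pos_iff.2 hs).ne'

lemma abs_deriv_dS_div_sinh_le (h₁ : 0 < r₁) (h₂ : 0 < r₂) (hs : 0 < s) :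
    |deriv (fun s ↦ dS r₁ r₂ s / sinh s) s| ≤ (r₁ + r₂) / s * ((s + 1) / s) := by
  have hsinh := sinh_pos_iff.2 hs
  have := dS_pos h₁ h₂ s
  have := cosh_pos s
  have hD := mul_nonneg (mul_sinh_div_dS_nonneg h₁ h₂ hs.le) hsinh.le
  have hcoth : cosh s / sinh s ≤ (s + 1) / s := by
    rw [div_le_div_iff₀ hsinh hs, mul_comm]
    exact mul_cosh_le_add_one_mul_sinh hs.le
  rw [(hasDerivAt_dS_div_sinh h₁ h₂ hs).deriv, abs_div, abs_of_pos (pow_pos hsinh 2), abs_sub_comm,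
    abs_of_nonneg (sub_nonneg.2 (mul_sinh_div_dS_mul_sinh_le h₁ h₂ s))]
  calc _ ≤ dS r₁ r₂ s * cosh s / sinh s ^ 2 := by gcongr; exact sub_le_self _ hD
    _ = dS r₁ r₂ s / sinh s * (cosh s / sinh s) := by ring
    _ ≤ (r₁ + r₂) / s * ((s + 1) / s) := by
      have := add_pos h₁ h₂
      exact mul_le_mul (dS_div_sinh_le h₁ h₂ hs) hcoth (by positivity) (by positivity)

end Distance

section SymbolBounds

/-- `f` satisfies the order-`0` symbol estimates on `S` up to the first derivative, with the
explicit constant `K`; the constant is a parameter because the estimates below have to be uniform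
in the frequency. -/
structure HasSymbolBoundsOn (f : ℝ → ℂ) (K : ℝ) (S : Set ℝ) : Prop where
  differentiableAt : ∀ x ∈ S, DifferentiableAt ℝ f x
  norm_le : ∀ x ∈ S, ‖f x‖ ≤ K
  norm_deriv_le : ∀ x ∈ S, ‖deriv f x‖ ≤ K / x

lemma IsSymbol0.exists_hasSymbolBoundsOn {a : ℝ → ℂ} (ha : IsSymbol0 a) :
    ∃ K, HasSymbolBoundsOn a K (Ioi 0) := by
  obtain ⟨hsmooth, ⟨M, hM⟩, hderiv⟩ := ha
  obtain ⟨C, hC⟩ := hderiv 1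
  refine ⟨max M C, fun x hx ↦ (hsmooth.differentiableOn (by simp)).differentiableAt
    (Ioi_mem_nhds hx), fun x hx ↦ (hM x hx).trans (le_max_left _ _), fun x hx ↦ ?_⟩
  have hx0 : 0 < x := hx
  have hCx := hC x hx
  rw [iteratedDerivWithin_one, derivWithin_of_isOpen isOpen_Ioi hx, Nat.cast_one, rpow_neg_one,
    ← div_eq_mul_inv] at hCx
  exact hCx.trans (by gcongr; exact le_max_right _ _)

namespace HasSymbolBoundsOn

variable {f g : ℝ → ℂ} {K L R₀ : ℝ} {S T : Set ℝ}

lemma mono (hf : HasSymbolBoundsOn f K S) (hTS : T ⊆ S) : HasSymbolBoundsOn f K T :=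
  ⟨fun x hx ↦ hf.differentiableAt x (hTS hx), fun x hx ↦ hf.norm_le x (hTS hx),
    fun x hx ↦ hf.norm_deriv_le x (hTS hx)⟩

lemma nonneg (hf : HasSymbolBoundsOn f K S) (hS : S.Nonempty) : 0 ≤ K :=
  (norm_nonneg _).trans (hf.norm_le _ hS.some_mem)

lemma mul (hf : HasSymbolBoundsOn f K S) (hg : HasSymbolBoundsOn g L S) :
    HasSymbolBoundsOn (fun x ↦ f x * g x) (2 * (K * L)) S := by
  refine ⟨fun x hx ↦ (hf.differentiableAt x hx).mul (hg.differentiableAt x hx), fun x hx ↦ ?_,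
    fun x hx ↦ ?_⟩
  · have hfx := hf.norm_le x hx
    have hgx := hg.norm_le x hx
    have hKL : ‖f x‖ * ‖g x‖ ≤ K * L :=
      mul_le_mul hfx hgx (norm_nonneg _) ((norm_nonneg _).trans hfx)
    rw [norm_mul]
    linarith [mul_nonneg (norm_nonneg (f x)) (norm_nonneg (g x))]
  · have hK := hf.nonneg ⟨x, hx⟩
    rw [deriv_fun_mul (hf.differentiableAt x hx) (hg.differentiableAt x hx)]
    calc ‖deriv f x * g x + f x * deriv g x‖
        ≤ ‖deriv f x‖ * ‖g x‖ + ‖f x‖ * ‖deriv g x‖ := by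
          simpa only [norm_mul] using norm_add_le (deriv f x * g x) (f x * deriv g x)
      _ ≤ K / x * L + K * (L / x) := by
          gcongr
          · exact (norm_nonneg _).trans (hf.norm_deriv_le x hx)
          exacts [hf.norm_deriv_le x hx, hg.norm_le x hx, hf.norm_le x hx, hg.norm_deriv_le x hx]
      _ = 2 * (K * L) / x := by ring

lemma comp_mul_left (hf : HasSymbolBoundsOn f K (Ioi 0)) {lam : ℝ} (hlam : 0 < lam) :
    HasSymbolBoundsOn (fun x ↦ f (lam * x)) K (Ioi 0) := by
  have hpos : ∀ x ∈ Ioi (0 : ℝ), lam * x ∈ Ioi (0 : ℝ) := fun x hx ↦ mul_pos hlam hx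
  refine ⟨fun x hx ↦ (hf.differentiableAt _ (hpos x hx)).comp x (by fun_prop),
    fun x hx ↦ hf.norm_le _ (hpos x hx), fun x hx ↦ ?_⟩
  rw [deriv_comp_mul_left, norm_smul, norm_of_nonneg hlam.le]
  calc lam * ‖deriv f (lam * x)‖ ≤ lam * (K / (lam * x)) := by
        gcongr
        exact hf.norm_deriv_le _ (hpos x hx)
    _ = K / x := by rw [← mul_div_assoc, mul_div_mul_left _ _ hlam.ne']

lemma norm_sub_le (hf : HasSymbolBoundsOn f K (Ici R₀)) (hR₀ : 0 < R₀) {x y : ℝ} (hx : R₀ ≤ x)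
    (hy : R₀ ≤ y) : ‖f y - f x‖ ≤ K / R₀ * |y - x| := by
  refine (convex_Ici R₀).norm_image_sub_le_of_norm_deriv_le hf.differentiableAt
    (fun z hz ↦ (hf.norm_deriv_le z hz).trans ?_) hx hy
  have := hf.nonneg ⟨z, hz⟩
  exact div_le_div_of_nonneg_left this hR₀ hz

end HasSymbolBoundsOn

lemma hasSymbolBoundsOn_add_rpow_neg {p ε R₀ : ℝ} (hp : 0 ≤ p) (hε : 0 ≤ ε) (hR₀ : 0 < R₀) :
    HasSymbolBoundsOn (fun x ↦ (((ε + x) ^ (-p) : ℝ) : ℂ)) ((1 + p) * R₀ ^ (-p)) (Ici R₀) := by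
  have hle : ∀ x ∈ Ici R₀, (ε + x) ^ (-p) ≤ R₀ ^ (-p) := fun x hx ↦
    rpow_le_rpow_of_nonpos hR₀ (hx.trans (le_add_of_nonneg_left hε)) (neg_nonpos.2 hp)
  have hpos : ∀ x ∈ Ici R₀, 0 < ε + x := fun x hx ↦ add_pos_of_nonneg_of_pos hε (hR₀.trans_le hx)
  have hderiv : ∀ x ∈ Ici R₀, HasDerivAt (fun x ↦ (((ε + x) ^ (-p) : ℝ) : ℂ))
      ((1 * -p * (ε + x) ^ (-p - 1) : ℝ) : ℂ) x := fun x hx ↦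
    (((hasDerivAt_id x).const_add ε).rpow_const (Or.inl (hpos x hx).ne')).ofReal_comp
  have hP := rpow_nonneg hR₀.le (-p)
  refine ⟨fun x hx ↦ (hderiv x hx).differentiableAt, fun x hx ↦ ?_, fun x hx ↦ ?_⟩
  · rw [Complex.norm_real, norm_of_nonneg (rpow_nonneg (hpos x hx).le _)]
    linarith [hle x hx, mul_nonneg hp hP]
  · have hx0 : 0 < x := hR₀.trans_le hx
    have hy0 := hpos x hx
    rw [(hderiv x hx).deriv, Complex.norm_real, one_mul, norm_mul, norm_neg, norm_of_nonneg hp,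
      norm_of_nonneg (rpow_nonneg hy0.le _), rpow_sub_one hy0.ne', ← mul_div_assoc]
    have := hle x hx
    gcongr
    · linarith
    · linarith

/-- The symbol `x ↦ (λ⁻¹ + x)^(-p) a(λ x)`, whose value at `d_s` is the `s`-dependent factor
`(2^{-j} + d_s)^{-3/2-δ} a(2^j d_s)` of `ψ₃`; here `λ = 2^j` and `p = 3/2 + δ`. -/
def dampedSymbol (p lam : ℝ) (a : ℝ → ℂ) (x : ℝ) : ℂ :=
  (((lam⁻¹ + x) ^ (-p) : ℝ) : ℂ) * a (lam * x)

variable {p lam R₀ K : ℝ} {a : ℝ → ℂ}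

lemma hasSymbolBoundsOn_dampedSymbol (ha : HasSymbolBoundsOn a K (Ioi 0)) (hp : 0 ≤ p)
    (hlam : 0 < lam) (hR₀ : 0 < R₀) :
    HasSymbolBoundsOn (dampedSymbol p lam a) (2 * ((1 + p) * R₀ ^ (-p) * K)) (Ici R₀) :=
  (hasSymbolBoundsOn_add_rpow_neg hp (inv_nonneg.2 hlam.le) hR₀).mul
    ((ha.comp_mul_left hlam).mono (Ici_subset_Ioi.2 hR₀))

lemma norm_dampedSymbol_sub_le (ha : HasSymbolBoundsOn a K (Ioi 0)) (hp : 0 ≤ p)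
    (hlam : 0 < lam) (hR₀ : 0 < R₀) {x : ℝ} (hx : R₀ ≤ x) :
    ‖dampedSymbol p lam a x - ((x ^ (-p) : ℝ) : ℂ) * a (lam * x)‖ ≤
      (1 + p) * R₀ ^ (-p) / R₀ * K * lam⁻¹ := by
  have hinv := inv_nonneg.2 hlam.le
  have hrpow := (hasSymbolBoundsOn_add_rpow_neg hp le_rfl hR₀).norm_sub_le hR₀ hx
    (hx.trans (le_add_of_nonneg_left hinv))
  simp only [zero_add, add_sub_cancel_right, abs_of_nonneg hinv] at hrpow
  rw [dampedSymbol, ← sub_mul, norm_mul, mul_right_comm]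
  gcongr
  exact ha.norm_le _ (mul_pos hlam (hR₀.trans_le hx))

end SymbolBounds

section WeightedSymbol

variable {A : ℝ → ℂ} {K R₀ r₁ r₂ α s : ℝ}

lemma hasDerivAt_comp_dS (hA : HasSymbolBoundsOn A K (Ici R₀)) (h₁ : 0 < r₁) (h₂ : 0 < r₂)
    (hR : R₀ ≤ r₁ + r₂) (s : ℝ) :
    HasDerivAt (fun s ↦ A (dS r₁ r₂ s))
      ((r₁ * r₂ * sinh s / dS r₁ r₂ s) • deriv A (dS r₁ r₂ s)) s :=
  (hA.differentiableAt _ (hR.trans (add_le_dS h₁.le h₂.le s))).hasDerivAt.scomp s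
    (hasDerivAt_dS h₁ h₂ s)

lemma norm_deriv_comp_dS_le (hA : HasSymbolBoundsOn A K (Ici R₀)) (h₁ : 0 < r₁) (h₂ : 0 < r₂)
    (hR : R₀ ≤ r₁ + r₂) (hs : 0 ≤ s) : ‖deriv (fun s ↦ A (dS r₁ r₂ s)) s‖ ≤ K * s := by
  have hd := dS_pos h₁ h₂ s
  have hmem : dS r₁ r₂ s ∈ Ici R₀ := hR.trans (add_le_dS h₁.le h₂.le s)
  rw [(hasDerivAt_comp_dS hA h₁ h₂ hR s).deriv, norm_smul,
    norm_of_nonneg (mul_sinh_div_dS_nonneg h₁ h₂ hs)]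
  calc r₁ * r₂ * sinh s / dS r₁ r₂ s * ‖deriv A (dS r₁ r₂ s)‖
      ≤ s * dS r₁ r₂ s * (K / dS r₁ r₂ s) :=
        mul_le_mul (mul_sinh_div_dS_le_mul_dS h₁ h₂ hs) (hA.norm_deriv_le _ hmem) (norm_nonneg _)
          (by positivity)
    _ = K * s := by field_simp

lemma hasDerivAt_cosh_smul_comp_dS (hA : HasSymbolBoundsOn A K (Ici R₀)) (h₁ : 0 < r₁)
    (h₂ : 0 < r₂) (hR : R₀ ≤ r₁ + r₂) (α s : ℝ) :
    HasDerivAt (fun s ↦ cosh (α * s) • A (dS r₁ r₂ s))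
      (cosh (α * s) • deriv (fun s ↦ A (dS r₁ r₂ s)) s +
        (sinh (α * s) * α) • A (dS r₁ r₂ s)) s := by
  have hcosh := ((hasDerivAt_id s).const_mul α).cosh
  rw [mul_one] at hcosh
  exact hcosh.smul (hasDerivAt_comp_dS hA h₁ h₂ hR s).differentiableAt.hasDerivAt

lemma norm_deriv_cosh_smul_comp_dS_le (hA : HasSymbolBoundsOn A K (Ici R₀)) (h₁ : 0 < r₁)
    (h₂ : 0 < r₂) (hR : R₀ ≤ r₁ + r₂) (hα : |α| ≤ 1) (hs : 0 ≤ s) :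
    ‖deriv (fun s ↦ cosh (α * s) • A (dS r₁ r₂ s)) s‖ ≤ 2 * K * (s * cosh (α * s)) := by
  have hcosh := cosh_pos (α * s)
  have hsinh : |sinh (α * s) * α| ≤ s * cosh (α * s) := by
    calc |sinh (α * s) * α| ≤ |α * s| * cosh (α * s) * 1 := by
          rw [abs_mul]
          exact mul_le_mul (abs_sinh_le_abs_mul_cosh _) hα (abs_nonneg α) (by positivity)
      _ ≤ s * cosh (α * s) := by
          rw [mul_one, abs_mul, abs_of_nonneg hs]
          gcongr
          exact mul_le_of_le_one_left hs hα
  rw [(hasDerivAt_cosh_smul_comp_dS hA h₁ h₂ hR α s).deriv]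
  refine (norm_add_le _ _).trans ?_
  rw [norm_smul, norm_smul, norm_of_nonneg hcosh.le, norm_eq_abs]
  calc _ ≤ cosh (α * s) * (K * s) + s * cosh (α * s) * K := by
        gcongr
        · exact norm_deriv_comp_dS_le hA h₁ h₂ hR hs
        · exact hA.norm_le _ (hR.trans (add_le_dS h₁.le h₂.le s))
    _ = 2 * K * (s * cosh (α * s)) := by ring

end WeightedSymbol

section SingularKernel

variable {B s α : ℝ}

lemma inv_sq_div_two_add_le (hB : 0 ≤ B) (hs : 0 < s) : (s ^ 2 / 2 + B)⁻¹ ≤ 2 / s ^ 2 := by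
  rw [← inv_div (s ^ 2)]
  exact inv_anti₀ (by positivity) (by linarith)

lemma cosh_sub_one_add_pos (hB : 0 ≤ B) (hs : s ≠ 0) : 0 < cosh s - 1 + B := by
  linarith [one_lt_cosh.2 hs]

lemma cosh_mul_inv_cosh_sub_one_add_le (hα : |α| < 1) (hB : 0 ≤ B) (hs : 0 < s) :
    cosh (α * s) * (cosh s - 1 + B)⁻¹ ≤ 64 / (1 - |α|) ^ 4 / (s ^ 2 * (1 + s ^ 2)) := by
  have : 0 < 1 - |α| := sub_pos.2 hα
  rw [← div_eq_mul_inv, div_div, div_le_div_iff₀ (cosh_sub_one_add_pos hB hs.ne') (by positivity)]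
  calc cosh (α * s) * ((1 - |α|) ^ 4 * (s ^ 2 * (1 + s ^ 2)))
      = (1 - |α|) ^ 4 * (s ^ 2 * (1 + s ^ 2) * cosh (α * s)) := by ring
    _ ≤ 64 * (cosh s - 1) := one_sub_abs_pow_four_mul_cosh_mul_le hα.le hs.le
    _ ≤ 64 * (cosh s - 1 + B) := by linarith

lemma inv_cosh_sub_one_add_mul_sinh_le (hB : 0 ≤ B) (hs : 0 < s) :
    (cosh s - 1 + B)⁻¹ * sinh s ≤ (s + 2) / s := by
  rw [inv_mul_le_iff₀ (cosh_sub_one_add_pos hB hs.ne'), ← mul_div_assoc, le_div_iff₀ hs]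
  nlinarith [mul_sinh_le_add_two_mul_cosh_sub_one hs.le]

lemma inv_cosh_sub_one_add_le_inv_sq_div_two_add (hB : 0 ≤ B) (hs : 0 < s) :
    (cosh s - 1 + B)⁻¹ ≤ (s ^ 2 / 2 + B)⁻¹ :=
  inv_anti₀ (by positivity) (by linarith [sq_div_two_le_cosh_sub_one s])

lemma inv_sub_inv_cosh_sub_one_add_le (hB : 0 ≤ B) (hs : 0 < s) :
    (s ^ 2 / 2 + B)⁻¹ - (cosh s - 1 + B)⁻¹ ≤ 4 / (1 + s ^ 2) := by
  have hG := cosh_sub_one_add_pos hB hs.ne'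
  have hH : 0 < s ^ 2 / 2 + B := by positivity
  have htaylor := cosh_sub_taylor_mul_le s
  have hcosh := sq_div_two_le_cosh_sub_one s
  rw [inv_sub_inv hH.ne' hG.ne', div_le_div_iff₀ (by positivity) (by positivity)]
  have hprod : s ^ 2 / 2 * (cosh s - 1) ≤ (s ^ 2 / 2 + B) * (cosh s - 1 + B) := by
    nlinarith [mul_nonneg hB (sq_nonneg s), mul_nonneg hB (sub_nonneg.2 (one_le_cosh s))]
  nlinarith

lemma abs_inv_cosh_sub_one_add_sq_mul_sinh_sub_le (hB : 0 ≤ B) (hs : 0 < s) :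
    |(cosh s - 1 + B)⁻¹ ^ 2 * sinh s - (s ^ 2 / 2 + B)⁻¹ ^ 2 * s| ≤ 16 / s := by
  set G := (cosh s - 1 + B)⁻¹ with hG
  set H := (s ^ 2 / 2 + B)⁻¹
  have hpos := cosh_sub_one_add_pos hB hs.ne'
  have hG0 : 0 < G := inv_pos.2 hpos
  have hGH : G ≤ H := inv_cosh_sub_one_add_le_inv_sq_div_two_add hB hs
  have hH : H ≤ 2 / s ^ 2 := inv_sq_div_two_add_le hB hs
  have hdiff : H - G ≤ 4 := (inv_sub_inv_cosh_sub_one_add_le hB hs).trans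
    (div_le_self (by norm_num) (by linarith [sq_nonneg s]))
  have hsinh : s ≤ sinh s := self_le_sinh_iff.2 hs.le
  have hnum : sinh s - s ≤ s * (cosh s - 1 + B) := by
    have := abs_sinh_le_abs_mul_cosh s
    rw [abs_of_pos hs, abs_of_pos (hs.trans_le hsinh)] at this
    linarith [mul_nonneg hs.le hB]
  have hupper : G ^ 2 * (sinh s - s) ≤ 2 / s := calc
    G ^ 2 * (sinh s - s) ≤ G ^ 2 * (s * (cosh s - 1 + B)) := by gcongr
    _ = s * G := by rw [hG]; field_simp
    _ ≤ s * (2 / s ^ 2) := by gcongr; exact hGH.trans hH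
    _ = 2 / s := by field_simp
  have hlower : (H ^ 2 - G ^ 2) * s ≤ 16 / s := calc
    (H ^ 2 - G ^ 2) * s = (H - G) * (H + G) * s := by ring
    _ ≤ 4 * (2 / s ^ 2 + 2 / s ^ 2) * s := by gcongr; exact hGH.trans hH
    _ = 16 / s := by field_simp; norm_num
  have hupper0 := mul_nonneg (sq_nonneg G) (sub_nonneg.2 hsinh)
  have hlower0 := mul_nonneg (sub_nonneg.2 (pow_le_pow_left₀ hG0.le hGH 2)) hs.le
  have : 2 / s ≤ 16 / s := by gcongr; norm_num
  exact abs_le.2 ⟨by linarith, by linarith⟩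

end SingularKernel

section Regularization

/-- `ψ` decays like `s⁻²` and has at worst a `s⁻¹` singularity of its derivative: the class of
amplitudes for which the oscillatory integral with phase `λ d_s` gains a factor
`(1 + λ r₁ r₂)^(-1/2)`. -/
structure IsAmplitude (ψ : ℝ → ℂ) (K : ℝ) : Prop where
  differentiableAt : ∀ s > 0, DifferentiableAt ℝ ψ s
  norm_le : ∀ s > 0, ‖ψ s‖ ≤ K / (1 + s ^ 2)
  norm_deriv_le : ∀ s > 0, ‖deriv ψ s‖ ≤ K / s

/-- The difference between `U / (cosh s - 1 + B)` and its leading part at the singularity, where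
`U` and `cosh s - 1` are replaced by `U 0` and `s² / 2`. With `B = 1 - cos ϑ` it is, up to the
factor `sin ϑ`, the part of `ψ_{3,e}` in which the two singularities cancel. -/
def singularDiff (U : ℝ → ℂ) (B s : ℝ) : ℂ :=
  (cosh s - 1 + B)⁻¹ • U s - (s ^ 2 / 2 + B)⁻¹ • U 0

variable {U : ℝ → ℂ} {K α B s : ℝ}

lemma hasDerivAt_inv_cosh_sub_one_add (hB : 0 ≤ B) (hs : s ≠ 0) :
    HasDerivAt (fun s ↦ (cosh s - 1 + B)⁻¹) (-((cosh s - 1 + B)⁻¹ ^ 2 * sinh s)) s := by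
  have hinv := (((hasDerivAt_cosh s).sub_const 1).add_const B).inv (cosh_sub_one_add_pos hB hs).ne'
  exact hinv.congr_deriv (by rw [inv_pow, neg_div, div_eq_inv_mul])

lemma hasDerivAt_inv_sq_div_two_add (hB : 0 ≤ B) (hs : s ≠ 0) :
    HasDerivAt (fun s ↦ (s ^ 2 / 2 + B)⁻¹) (-((s ^ 2 / 2 + B)⁻¹ ^ 2 * s)) s := by
  have hsq : HasDerivAt (fun s : ℝ ↦ s ^ 2 / 2 + B) s s :=
    (((hasDerivAt_pow 2 s).div_const 2).add_const B).congr_deriv (by simp)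
  exact (hsq.inv (by positivity)).congr_deriv (by rw [inv_pow, neg_div, div_eq_inv_mul])

lemma hasDerivAt_singularDiff (hU : DifferentiableAt ℝ U s) (hB : 0 ≤ B) (hs : s ≠ 0) :
    HasDerivAt (singularDiff U B)
      ((cosh s - 1 + B)⁻¹ • deriv U s - ((cosh s - 1 + B)⁻¹ ^ 2 * sinh s) • (U s - U 0) -
        ((cosh s - 1 + B)⁻¹ ^ 2 * sinh s - (s ^ 2 / 2 + B)⁻¹ ^ 2 * s) • U 0) s := by
  have hdiff := ((hasDerivAt_inv_cosh_sub_one_add hB hs).smul hU.hasDerivAt).sub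
    ((hasDerivAt_inv_sq_div_two_add hB hs).smul_const (U 0))
  exact hdiff.congr_deriv (by module)

lemma norm_sub_apply_zero_le (hK : 0 ≤ K) (hU : ∀ x ≥ 0, DifferentiableAt ℝ U x)
    (hU' : ∀ x ≥ 0, ‖deriv U x‖ ≤ K * (x * cosh (α * x))) (hs : 0 ≤ s) :
    ‖U s - U 0‖ ≤ K * (s ^ 2 * cosh (α * s)) := by
  have hbound : ∀ x ∈ Icc 0 s, ‖deriv U x‖ ≤ K * (s * cosh (α * s)) := fun x hx ↦ by
    have hcosh : cosh (α * x) ≤ cosh (α * s) := by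
      rw [cosh_le_cosh, abs_mul, abs_mul, abs_of_nonneg hx.1, abs_of_nonneg hs]
      exact mul_le_mul_of_nonneg_left hx.2 (abs_nonneg α)
    have := cosh_pos (α * x)
    exact (hU' x hx.1).trans (by gcongr; exact hx.2)
  have hmvt := (convex_Icc 0 s).norm_image_sub_le_of_norm_deriv_le (fun x hx ↦ hU x hx.1) hbound
    (left_mem_Icc.2 hs) (right_mem_Icc.2 hs)
  rw [sub_zero, norm_of_nonneg hs] at hmvt
  exact hmvt.trans_eq (by ring)

/-- Here `‖U s - U 0‖ = O(s² cosh (α s))` cancels the singularity of `(cosh s - 1 + B)⁻¹`. -/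
lemma norm_inv_cosh_sub_one_add_smul_sub_le (hK : 0 ≤ K) (hU : ∀ x ≥ 0, DifferentiableAt ℝ U x)
    (hU' : ∀ x ≥ 0, ‖deriv U x‖ ≤ K * (x * cosh (α * x))) (hα : |α| < 1) (hB : 0 ≤ B)
    (hs : 0 < s) :
    ‖(cosh s - 1 + B)⁻¹ • (U s - U 0)‖ ≤ 64 / (1 - |α|) ^ 4 * K / (1 + s ^ 2) := by
  have hpos := cosh_sub_one_add_pos hB hs.ne'
  rw [norm_smul, norm_of_nonneg (inv_nonneg.2 hpos.le)]
  calc (cosh s - 1 + B)⁻¹ * ‖U s - U 0‖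
      ≤ (cosh s - 1 + B)⁻¹ * (K * (s ^ 2 * cosh (α * s))) := by
        gcongr
        exact norm_sub_apply_zero_le hK hU hU' hs.le
    _ = K * s ^ 2 * (cosh (α * s) * (cosh s - 1 + B)⁻¹) := by ring
    _ ≤ K * s ^ 2 * (64 / (1 - |α|) ^ 4 / (s ^ 2 * (1 + s ^ 2))) := by
        gcongr
        exact cosh_mul_inv_cosh_sub_one_add_le hα hB hs
    _ = 64 / (1 - |α|) ^ 4 * K / (1 + s ^ 2) := by field_simp

lemma norm_singularDiff_le (hU : ∀ x ≥ 0, DifferentiableAt ℝ U x) (hU0 : ‖U 0‖ ≤ K)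
    (hU' : ∀ x ≥ 0, ‖deriv U x‖ ≤ K * (x * cosh (α * x))) (hα : |α| < 1) (hB : 0 ≤ B)
    (hs : 0 < s) :
    ‖singularDiff U B s‖ ≤ (64 / (1 - |α|) ^ 4 + 4) * K / (1 + s ^ 2) := by
  have hK := (norm_nonneg _).trans hU0
  have hmain := norm_inv_cosh_sub_one_add_smul_sub_le hK hU hU' hα hB hs
  have hkernel : ‖((s ^ 2 / 2 + B)⁻¹ - (cosh s - 1 + B)⁻¹) • U 0‖ ≤ 4 / (1 + s ^ 2) * K := by
    rw [norm_smul, norm_of_nonneg (sub_nonneg.2 (inv_cosh_sub_one_add_le_inv_sq_div_two_add hB hs))]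
    gcongr
    exact inv_sub_inv_cosh_sub_one_add_le hB hs
  calc ‖singularDiff U B s‖
      = ‖(cosh s - 1 + B)⁻¹ • (U s - U 0) -
          ((s ^ 2 / 2 + B)⁻¹ - (cosh s - 1 + B)⁻¹) • U 0‖ := by
        rw [singularDiff]
        congr 1
        module
    _ ≤ 64 / (1 - |α|) ^ 4 * K / (1 + s ^ 2) + 4 / (1 + s ^ 2) * K :=
        (norm_sub_le _ _).trans (add_le_add hmain hkernel)
    _ = (64 / (1 - |α|) ^ 4 + 4) * K / (1 + s ^ 2) := by ring

lemma norm_inv_cosh_sub_one_add_smul_deriv_le (hK : 0 ≤ K)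
    (hU' : ∀ x ≥ 0, ‖deriv U x‖ ≤ K * (x * cosh (α * x))) (hα : |α| < 1) (hB : 0 ≤ B)
    (hs : 0 < s) :
    ‖(cosh s - 1 + B)⁻¹ • deriv U s‖ ≤ 64 / (1 - |α|) ^ 4 * K / s := by
  have hpos := cosh_sub_one_add_pos hB hs.ne'
  have : 0 < 1 - |α| := sub_pos.2 hα
  rw [norm_smul, norm_of_nonneg (inv_nonneg.2 hpos.le)]
  calc (cosh s - 1 + B)⁻¹ * ‖deriv U s‖
      ≤ (cosh s - 1 + B)⁻¹ * (K * (s * cosh (α * s))) := by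
        gcongr
        exact hU' s hs.le
    _ = K * s * (cosh (α * s) * (cosh s - 1 + B)⁻¹) := by ring
    _ ≤ K * s * (64 / (1 - |α|) ^ 4 / (s ^ 2 * (1 + s ^ 2))) := by
        gcongr
        exact cosh_mul_inv_cosh_sub_one_add_le hα hB hs
    _ = 64 / (1 - |α|) ^ 4 * K / s / (1 + s ^ 2) := by field_simp
    _ ≤ 64 / (1 - |α|) ^ 4 * K / s := div_le_self (by positivity) (by linarith [sq_nonneg s])

lemma norm_inv_cosh_sub_one_add_sq_smul_sub_le (hK : 0 ≤ K)
    (hU : ∀ x ≥ 0, DifferentiableAt ℝ U x)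
    (hU' : ∀ x ≥ 0, ‖deriv U x‖ ≤ K * (x * cosh (α * x))) (hα : |α| < 1) (hB : 0 ≤ B)
    (hs : 0 < s) :
    ‖((cosh s - 1 + B)⁻¹ ^ 2 * sinh s) • (U s - U 0)‖ ≤ 3 * (64 / (1 - |α|) ^ 4) * K / s := by
  have : 0 < 1 - |α| := sub_pos.2 hα
  have hsinh : 0 ≤ (cosh s - 1 + B)⁻¹ * sinh s :=
    mul_nonneg (inv_nonneg.2 (cosh_sub_one_add_pos hB hs.ne').le) (sinh_nonneg_iff.2 hs.le)
  rw [sq, mul_right_comm, mul_smul, norm_smul, norm_of_nonneg hsinh]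
  calc (cosh s - 1 + B)⁻¹ * sinh s * ‖(cosh s - 1 + B)⁻¹ • (U s - U 0)‖
      ≤ (s + 2) / s * (64 / (1 - |α|) ^ 4 * K / (1 + s ^ 2)) :=
        mul_le_mul (inv_cosh_sub_one_add_mul_sinh_le hB hs)
          (norm_inv_cosh_sub_one_add_smul_sub_le hK hU hU' hα hB hs) (norm_nonneg _)
          (by positivity)
    _ = (s + 2) / (1 + s ^ 2) * (64 / (1 - |α|) ^ 4 * K / s) := by ring
    _ ≤ 3 * (64 / (1 - |α|) ^ 4 * K / s) := by
        gcongr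
        rw [div_le_iff₀ (by positivity)]
        nlinarith [sq_nonneg (s - 1)]
    _ = 3 * (64 / (1 - |α|) ^ 4) * K / s := by ring

lemma norm_deriv_singularDiff_le (hU : ∀ x ≥ 0, DifferentiableAt ℝ U x) (hU0 : ‖U 0‖ ≤ K)
    (hU' : ∀ x ≥ 0, ‖deriv U x‖ ≤ K * (x * cosh (α * x))) (hα : |α| < 1) (hB : 0 ≤ B)
    (hs : 0 < s) :
    ‖deriv (singularDiff U B) s‖ ≤ (4 * (64 / (1 - |α|) ^ 4) + 16) * K / s := by
  have hK := (norm_nonneg _).trans hU0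
  have hfirst := norm_inv_cosh_sub_one_add_smul_deriv_le hK hU' hα hB hs
  have hsecond := norm_inv_cosh_sub_one_add_sq_smul_sub_le hK hU hU' hα hB hs
  have hthird : ‖((cosh s - 1 + B)⁻¹ ^ 2 * sinh s - (s ^ 2 / 2 + B)⁻¹ ^ 2 * s) • U 0‖ ≤
      16 / s * K := by
    rw [norm_smul, norm_eq_abs]
    gcongr
    exact abs_inv_cosh_sub_one_add_sq_mul_sinh_sub_le hB hs
  rw [(hasDerivAt_singularDiff (hU s hs.le) hB hs.ne').deriv]
  calc _ ≤ 64 / (1 - |α|) ^ 4 * K / s + 3 * (64 / (1 - |α|) ^ 4) * K / s + 16 / s * K :=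
        (norm_sub_le _ _).trans
          (add_le_add ((norm_sub_le _ _).trans (add_le_add hfirst hsecond)) hthird)
    _ = (4 * (64 / (1 - |α|) ^ 4) + 16) * K / s := by ring

theorem isAmplitude_singularDiff (hU : ∀ x ≥ 0, DifferentiableAt ℝ U x) (hU0 : ‖U 0‖ ≤ K)
    (hU' : ∀ x ≥ 0, ‖deriv U x‖ ≤ K * (x * cosh (α * x))) (hα : |α| < 1) (hB : 0 ≤ B) :
    IsAmplitude (singularDiff U B) ((4 * (64 / (1 - |α|) ^ 4) + 16) * K) := by
  refine ⟨fun s hs ↦ (hasDerivAt_singularDiff (hU s hs.le) hB hs.ne').differentiableAt,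
    fun s hs ↦ (norm_singularDiff_le hU hU0 hU' hα hB hs).trans ?_,
    fun s hs ↦ norm_deriv_singularDiff_le hU hU0 hU' hα hB hs⟩
  have hK := (norm_nonneg _).trans hU0
  have : 0 < 1 - |α| := sub_pos.2 hα
  gcongr
  · exact le_mul_of_one_le_left (by positivity) (by norm_num)
  · norm_num

end Regularization

section OscillatoryIntegral

variable {Φ Φ' : ℝ → ℝ} {F f : ℝ → ℂ} {S : Set ℝ} {ε c c₀ c₁ : ℝ}

lemma norm_exp_I_mul_mul (x : ℝ) (z : ℂ) : ‖Complex.exp (Complex.I * (x : ℂ)) * z‖ = ‖z‖ := by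
  rw [norm_mul, mul_comm Complex.I, Complex.norm_exp_ofReal_mul_I, one_mul]

lemma IsAmplitude.integrableOn {ψ : ℝ → ℂ} {K : ℝ} (hψ : IsAmplitude ψ K) :
    IntegrableOn ψ (Ioi 0) := by
  have hcont : ContinuousOn ψ (Ioi 0) := fun s hs ↦
    (hψ.differentiableAt s hs).continuousAt.continuousWithinAt
  refine (integrable_inv_one_add_sq.const_mul K).integrableOn.mono'
    (hcont.aestronglyMeasurable measurableSet_Ioi) ?_
  exact ae_restrict_of_forall_mem measurableSet_Ioi fun s hs ↦ hψ.norm_le s hs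

lemma integrableOn_exp_I_mul_mul (hΦ : ContinuousOn Φ S) (hS : MeasurableSet S)
    (hf : IntegrableOn f S) :
    IntegrableOn (fun s ↦ Complex.exp (Complex.I * (Φ s : ℂ)) * f s) S := by
  have hcont : ContinuousOn (fun s ↦ Complex.exp (Complex.I * (Φ s : ℂ))) S := by fun_prop
  refine Integrable.bdd_mul (c := 1) hf (hcont.aestronglyMeasurable hS) (ae_of_all _ fun s ↦ ?_)
  rw [mul_comm, Complex.norm_exp_ofReal_mul_I]

lemma const_div_sq_eq_const_mul_rpow {s : ℝ} (hs : 0 < s) (c : ℝ) :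
    c / s ^ 2 = c * s ^ (-2 : ℝ) := by
  rw [rpow_neg hs.le, rpow_two, div_eq_mul_inv]

lemma integrableOn_Ioi_const_div_sq (hε : 0 < ε) (c : ℝ) :
    IntegrableOn (fun s ↦ c / s ^ 2) (Ioi ε) := by
  have hrpow : IntegrableOn (fun s ↦ c * s ^ (-2 : ℝ)) (Ioi ε) :=
    (integrableOn_Ioi_rpow_of_lt (by norm_num) hε).const_mul c
  exact hrpow.congr_fun (fun s hs ↦ (const_div_sq_eq_const_mul_rpow (hε.trans hs) c).symm)
    measurableSet_Ioi

lemma integral_Ioi_const_div_sq (hε : 0 < ε) (c : ℝ) : ∫ s in Ioi ε, c / s ^ 2 = c / ε := by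
  rw [setIntegral_congr_fun measurableSet_Ioi fun s hs ↦
      const_div_sq_eq_const_mul_rpow (hε.trans hs) c,
    integral_const_mul, integral_Ioi_rpow_of_lt (by norm_num) hε]
  norm_num [rpow_neg_one, div_eq_mul_inv]

lemma norm_setIntegral_Ioi_le_of_norm_le_div_sq (hε : 0 < ε) (hf : ∀ s > ε, ‖f s‖ ≤ c / s ^ 2) :
    ‖∫ s in Ioi ε, f s‖ ≤ c / ε :=
  (norm_integral_le_of_norm_le (integrableOn_Ioi_const_div_sq hε c)
    (ae_restrict_of_forall_mem measurableSet_Ioi hf)).trans_eq (integral_Ioi_const_div_sq hε c)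

lemma norm_integral_exp_I_mul_deriv_smul_le (hε : 0 < ε) (hΦ : ∀ s ≥ ε, HasDerivAt Φ (Φ' s) s)
    (hF : ∀ s ≥ ε, DifferentiableAt ℝ F s) (hF₀ : ∀ s ≥ ε, ‖F s‖ ≤ c₀ / s)
    (hF₁ : ∀ s ≥ ε, ‖deriv F s‖ ≤ c₁ / s ^ 2)
    (hint : IntegrableOn (fun s ↦ Φ' s • F s) (Ioi ε)) :
    ‖∫ s in Ioi ε, Complex.exp (Complex.I * (Φ s : ℂ)) * Φ' s • F s‖ ≤ (c₀ + c₁) / ε := by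
  set E : ℝ → ℂ := fun s ↦ Complex.exp (Complex.I * (Φ s : ℂ))
  have hE : ∀ s z, ‖E s * z‖ = ‖z‖ := fun s z ↦ norm_exp_I_mul_mul (Φ s) z
  have hΦcont : ContinuousOn Φ (Ioi ε) := fun s hs ↦
    (hΦ s (le_of_lt hs)).continuousAt.continuousWithinAt
  have hderiv : ∀ s ∈ Ici ε, HasDerivAt (fun s ↦ E s * F s)
      (Complex.I * (E s * Φ' s • F s) + E s * deriv F s) s := fun s hs ↦
    ((((hΦ s hs).ofReal_comp.const_mul Complex.I).cexp).mul (hF s hs).hasDerivAt).congr_deriv <| by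
      rw [Complex.real_smul]
      ring
  have hint₀ : IntegrableOn (fun s ↦ E s * Φ' s • F s) (Ioi ε) :=
    integrableOn_exp_I_mul_mul hΦcont measurableSet_Ioi hint
  have hint₁ : IntegrableOn (fun s ↦ E s * deriv F s) (Ioi ε) :=
    integrableOn_exp_I_mul_mul hΦcont measurableSet_Ioi <|
      (integrableOn_Ioi_const_div_sq hε c₁).mono' (stronglyMeasurable_deriv F).aestronglyMeasurable
        (ae_restrict_of_forall_mem measurableSet_Ioi fun s hs ↦ hF₁ s (le_of_lt hs))
  have hlim : Filter.Tendsto (fun s ↦ E s * F s) Filter.atTop (nhds 0) := by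
    refine squeeze_zero_norm' ?_ (Filter.Tendsto.const_div_atTop Filter.tendsto_id c₀)
    filter_upwards [Filter.eventually_ge_atTop ε] with s hs
    exact (hE s _).trans_le (hF₀ s hs)
  have hparts := integral_Ioi_of_hasDerivAt_of_tendsto' hderiv
    ((hint₀.const_mul Complex.I).add hint₁) hlim
  rw [integral_add (hint₀.const_mul _) hint₁, integral_const_mul, zero_sub] at hparts
  calc ‖∫ s in Ioi ε, E s * Φ' s • F s‖ = ‖Complex.I * ∫ s in Ioi ε, E s * Φ' s • F s‖ := by
        rw [norm_mul, Complex.norm_I, one_mul]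
    _ = ‖-(E ε * F ε) - ∫ s in Ioi ε, E s * deriv F s‖ := by rw [eq_sub_of_add_eq hparts]
    _ ≤ c₀ / ε + c₁ / ε := by
        refine (norm_sub_le _ _).trans (add_le_add ?_ ?_)
        · rw [norm_neg, hE]
          exact hF₀ ε le_rfl
        · exact norm_setIntegral_Ioi_le_of_norm_le_div_sq hε fun s hs ↦
            (hE s _).trans_le (hF₁ s hs.le)
    _ = (c₀ + c₁) / ε := by ring

end OscillatoryIntegral

section DistancePhase

variable {ψ : ℝ → ℂ} {K r₁ r₂ lam s ε : ℝ}

lemma IsAmplitude.nonneg (hψ : IsAmplitude ψ K) : 0 ≤ K := by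
  have := (norm_nonneg _).trans (hψ.norm_deriv_le 1 one_pos)
  rwa [div_one] at this

lemma IsAmplitude.norm_le_const (hψ : IsAmplitude ψ K) (hs : 0 < s) : ‖ψ s‖ ≤ K :=
  (hψ.norm_le s hs).trans (div_le_self hψ.nonneg (by linarith [sq_nonneg s]))

lemma IsAmplitude.norm_dS_div_sinh_smul_le (hψ : IsAmplitude ψ K) (h₁ : 0 < r₁) (h₂ : 0 < r₂)
    (hs : 0 < s) : ‖(dS r₁ r₂ s / sinh s) • ψ s‖ ≤ (r₁ + r₂) * K / s := by
  have hweight : 0 ≤ dS r₁ r₂ s / sinh s :=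
    div_nonneg (dS_pos h₁ h₂ s).le (sinh_nonneg_iff.2 hs.le)
  rw [norm_smul, norm_of_nonneg hweight]
  calc dS r₁ r₂ s / sinh s * ‖ψ s‖ ≤ (r₁ + r₂) / s * K :=
        mul_le_mul (dS_div_sinh_le h₁ h₂ hs) (hψ.norm_le_const hs) (norm_nonneg _) (by positivity)
    _ = (r₁ + r₂) * K / s := by ring

lemma IsAmplitude.norm_deriv_dS_div_sinh_smul_le (hψ : IsAmplitude ψ K) (h₁ : 0 < r₁)
    (h₂ : 0 < r₂) (hs : 0 < s) :
    ‖deriv (fun s ↦ (dS r₁ r₂ s / sinh s) • ψ s) s‖ ≤ 3 * (r₁ + r₂) * K / s ^ 2 := by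
  have hK := hψ.nonneg
  have hweight : 0 ≤ dS r₁ r₂ s / sinh s :=
    div_nonneg (dS_pos h₁ h₂ s).le (sinh_nonneg_iff.2 hs.le)
  rw [deriv_fun_smul (hasDerivAt_dS_div_sinh h₁ h₂ hs).differentiableAt
    (hψ.differentiableAt s hs)]
  refine (norm_add_le _ _).trans ?_
  rw [norm_smul, norm_smul, norm_of_nonneg hweight, norm_eq_abs]
  calc _ ≤ (r₁ + r₂) / s * (K / s) + (r₁ + r₂) / s * ((s + 1) / s) * (K / (1 + s ^ 2)) := by
        exact add_le_add
          (mul_le_mul (dS_div_sinh_le h₁ h₂ hs) (hψ.norm_deriv_le s hs) (norm_nonneg _)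
            (by positivity))
          (mul_le_mul (abs_deriv_dS_div_sinh_le h₁ h₂ hs) (hψ.norm_le s hs) (norm_nonneg _)
            (by positivity))
    _ = (1 + (s + 1) / (1 + s ^ 2)) * ((r₁ + r₂) * K / s ^ 2) := by ring
    _ ≤ 3 * ((r₁ + r₂) * K / s ^ 2) := by
        gcongr
        have : (s + 1) / (1 + s ^ 2) ≤ 2 := by
          rw [div_le_iff₀ (by positivity)]
          nlinarith [sq_nonneg (s - 1)]
        linarith
    _ = 3 * (r₁ + r₂) * K / s ^ 2 := by ring

/-- The weight `d_s / sinh s` turns the derivative of the phase into the constant `λ r₁ r₂`. -/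
lemma IsAmplitude.mul_norm_integral_Ioi_exp_dS_mul_le (hψ : IsAmplitude ψ K) (h₁ : 0 < r₁)
    (h₂ : 0 < r₂) (hlam : 0 < lam) (hε : 0 < ε) :
    lam * r₁ * r₂ *
      ‖∫ s in Ioi ε, Complex.exp (Complex.I * ((lam * dS r₁ r₂ s : ℝ) : ℂ)) * ψ s‖ ≤
      4 * (r₁ + r₂) * K / ε := by
  have hphase : ∀ s ∈ Ioi ε, (lam * (r₁ * r₂ * sinh s / dS r₁ r₂ s)) •
      (dS r₁ r₂ s / sinh s) • ψ s = (lam * r₁ * r₂) • ψ s := fun s hs ↦ by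
    have := (dS_pos h₁ h₂ s).ne'
    have := (sinh_pos_iff.2 (hε.trans hs)).ne'
    rw [smul_smul]
    congr 1
    field_simp
  have hint : IntegrableOn (fun s ↦ (lam * r₁ * r₂) • ψ s) (Ioi ε) :=
    (hψ.integrableOn.mono_set (Ioi_subset_Ioi hε.le)).smul (lam * r₁ * r₂)
  have hparts := norm_integral_exp_I_mul_deriv_smul_le
    (F := fun s ↦ (dS r₁ r₂ s / sinh s) • ψ s) hε
    (fun s _ ↦ (hasDerivAt_dS h₁ h₂ s).const_mul lam)
    (fun s hs ↦ (hasDerivAt_dS_div_sinh h₁ h₂ (hε.trans_le hs)).differentiableAt.smul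
      (hψ.differentiableAt s (hε.trans_le hs)))
    (fun s hs ↦ hψ.norm_dS_div_sinh_smul_le h₁ h₂ (hε.trans_le hs))
    (fun s hs ↦ hψ.norm_deriv_dS_div_sinh_smul_le h₁ h₂ (hε.trans_le hs))
    (hint.congr_fun (fun s hs ↦ (hphase s hs).symm) measurableSet_Ioi)
  rw [setIntegral_congr_fun measurableSet_Ioi fun s hs ↦ by rw [hphase s hs, mul_smul_comm],
    integral_smul, norm_smul, norm_of_nonneg (by positivity : 0 ≤ lam * r₁ * r₂)] at hparts
  exact hparts.trans_eq (by ring)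

lemma IsAmplitude.norm_integral_Ioi_exp_mul_le (hψ : IsAmplitude ψ K) (Φ : ℝ → ℝ) (hε : 0 < ε) :
    ‖∫ s in Ioi ε, Complex.exp (Complex.I * (Φ s : ℂ)) * ψ s‖ ≤ K / ε := by
  have hK := hψ.nonneg
  refine norm_setIntegral_Ioi_le_of_norm_le_div_sq hε fun s hs ↦ ?_
  have hs0 : 0 < s := hε.trans hs
  rw [norm_exp_I_mul_mul]
  exact (hψ.norm_le s hs0).trans (by gcongr; linarith)

lemma IsAmplitude.norm_integral_Ioc_exp_mul_le (hψ : IsAmplitude ψ K) (Φ : ℝ → ℝ) (hε : 0 < ε) :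
    ‖∫ s in Ioc 0 ε, Complex.exp (Complex.I * (Φ s : ℂ)) * ψ s‖ ≤ K * ε := by
  have hbound : ∀ s ∈ Ioc 0 ε, ‖Complex.exp (Complex.I * (Φ s : ℂ)) * ψ s‖ ≤ K := fun s hs ↦ by
    rw [norm_exp_I_mul_mul]
    exact hψ.norm_le_const hs.1
  simpa [hε.le] using norm_setIntegral_le_of_norm_le_const (measure_Ioc_lt_top (μ := volume)) hbound

theorem IsAmplitude.norm_integral_exp_dS_mul_le (hψ : IsAmplitude ψ K) (h₁ : 0 < r₁) (h₂ : 0 < r₂)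
    (hlam : 0 < lam) :
    ‖∫ s in Ioi 0, Complex.exp (Complex.I * ((lam * dS r₁ r₂ s : ℝ) : ℂ)) * ψ s‖ ≤
      (4 * (r₁ + r₂) + 2) * K * (1 + lam * r₁ * r₂) ^ (-(1 : ℝ) / 2) := by
  set μ := 1 + lam * r₁ * r₂ with hμ
  have hμ0 : 0 < μ := by positivity
  set ε := μ ^ (-(1 : ℝ) / 2)
  have hε : 0 < ε := rpow_pos_of_pos hμ0 _
  have hε_sq : μ * ε ^ 2 = 1 := by
    rw [← rpow_mul_natCast hμ0.le, show -(1 : ℝ) / 2 * (2 : ℕ) = -1 by norm_num, rpow_neg_one,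
      mul_inv_cancel₀ hμ0.ne']
  set E : ℝ → ℂ := fun s ↦ Complex.exp (Complex.I * ((lam * dS r₁ r₂ s : ℝ) : ℂ)) * ψ s
  have hint : IntegrableOn E (Ioi 0) :=
    integrableOn_exp_I_mul_mul (by fun_prop) measurableSet_Ioi hψ.integrableOn
  have htail : ‖∫ s in Ioi ε, E s‖ ≤ (4 * (r₁ + r₂) + 1) * K * ε := by
    refine le_of_mul_le_mul_left ?_ hμ0
    calc μ * ‖∫ s in Ioi ε, E s‖
        = ‖∫ s in Ioi ε, E s‖ + lam * r₁ * r₂ * ‖∫ s in Ioi ε, E s‖ := by rw [hμ]; ring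
      _ ≤ K / ε + 4 * (r₁ + r₂) * K / ε :=
          add_le_add (hψ.norm_integral_Ioi_exp_mul_le _ hε)
            (hψ.mul_norm_integral_Ioi_exp_dS_mul_le h₁ h₂ hlam hε)
      _ = (4 * (r₁ + r₂) + 1) * K * (μ * ε ^ 2) / ε := by rw [hε_sq]; ring
      _ = μ * ((4 * (r₁ + r₂) + 1) * K * ε) := by field_simp
  rw [← Ioc_union_Ioi_eq_Ioi hε.le, setIntegral_union (Ioc_disjoint_Ioi le_rfl) measurableSet_Ioi
    (hint.mono_set Ioc_subset_Ioi_self) (hint.mono_set (Ioi_subset_Ioi hε.le))]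
  calc _ ≤ K * ε + (4 * (r₁ + r₂) + 1) * K * ε :=
        norm_add_le_of_le (hψ.norm_integral_Ioc_exp_mul_le _ hε) htail
    _ = (4 * (r₁ + r₂) + 2) * K * ε := by ring

end DistancePhase

section PoissonKernel

variable {b : ℝ}

lemma inv_sq_div_two_add_two_mul_sq (hb : b ≠ 0) (s : ℝ) :
    (s ^ 2 / 2 + 2 * b ^ 2)⁻¹ = (2 * b ^ 2)⁻¹ * (1 + ((2 * b)⁻¹ * s) ^ 2)⁻¹ := by
  rw [← mul_inv]
  congr 1
  field_simp
  ring

lemma integrable_inv_sq_div_two_add (hb : b ≠ 0) :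
    Integrable fun s : ℝ ↦ (s ^ 2 / 2 + 2 * b ^ 2)⁻¹ := by
  simp_rw [inv_sq_div_two_add_two_mul_sq hb]
  exact (integrable_inv_one_add_sq.comp_mul_left' (inv_ne_zero (by simpa using hb))).const_mul _

lemma integral_Ioi_inv_sq_div_two_add (hb : 0 < b) :
    ∫ s in Ioi (0 : ℝ), (s ^ 2 / 2 + 2 * b ^ 2)⁻¹ = π / (2 * b) := by
  simp_rw [inv_sq_div_two_add_two_mul_sq hb.ne']
  rw [integral_const_mul, integral_comp_mul_left_Ioi (fun x ↦ (1 + x ^ 2)⁻¹) 0 (by positivity),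
    mul_zero, integral_Ioi_inv_one_add_sq, arctan_zero, sub_zero, smul_eq_mul]
  field_simp

lemma sin_eq_two_mul_sin_half_mul_cos_half (ϑ : ℝ) : sin ϑ = 2 * sin (ϑ / 2) * cos (ϑ / 2) := by
  rw [← sin_two_mul, mul_div_cancel₀ ϑ two_ne_zero]

lemma integrable_sin_div_sq_div_two_add (ϑ : ℝ) :
    Integrable fun s ↦ sin ϑ / (s ^ 2 / 2 + 2 * sin (ϑ / 2) ^ 2) := by
  by_cases hsin : sin (ϑ / 2) = 0
  · simp [sin_eq_two_mul_sin_half_mul_cos_half ϑ, hsin]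
  · exact (integrable_inv_sq_div_two_add hsin).const_mul (sin ϑ)

lemma integral_Ioi_abs_sin_div_sq_div_two_add_le (ϑ : ℝ) :
    ∫ s in Ioi (0 : ℝ), |sin ϑ / (s ^ 2 / 2 + 2 * sin (ϑ / 2) ^ 2)| ≤ π := by
  by_cases hsin : sin (ϑ / 2) = 0
  · simp [sin_eq_two_mul_sin_half_mul_cos_half ϑ, hsin, pi_pos.le]
  have hpos := abs_pos.2 hsin
  have habs : ∀ s : ℝ, |sin ϑ / (s ^ 2 / 2 + 2 * sin (ϑ / 2) ^ 2)| =
      |sin ϑ| * (s ^ 2 / 2 + 2 * |sin (ϑ / 2)| ^ 2)⁻¹ := fun s ↦ by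
    rw [abs_div, abs_of_nonneg (by positivity : 0 ≤ s ^ 2 / 2 + 2 * sin (ϑ / 2) ^ 2), sq_abs,
      div_eq_mul_inv]
  simp_rw [habs]
  rw [integral_const_mul, integral_Ioi_inv_sq_div_two_add hpos, ← mul_div_assoc,
    div_le_iff₀ (by positivity), mul_comm π]
  gcongr
  rw [sin_eq_two_mul_sin_half_mul_cos_half, abs_mul, abs_mul, abs_two]
  exact mul_le_of_le_one_right (by positivity) (abs_cos_le_one _)

end PoissonKernel

section Kernel

variable {δ α r₁ r₂ R₀ K lam : ℝ} {a A : ℝ → ℂ}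

lemma cosh_sub_cos (s ϑ : ℝ) : cosh s - cos ϑ = cosh s - 1 + 2 * sin (ϑ / 2) ^ 2 := by
  rw [sin_sq_eq_half_sub, mul_div_cancel₀ ϑ two_ne_zero]
  ring

lemma psi3_sub_psi3m (h₁ : 0 ≤ r₁) (h₂ : 0 ≤ r₂) (δ α : ℝ) (a : ℝ → ℂ) (j : ℕ) (φ s : ℝ) :
    psi3 δ α a j r₁ r₂ φ s - psi3m δ a j r₁ r₂ φ s =
      (sin (φ + π) : ℂ) * singularDiff
        (fun s ↦ cosh (α * s) • dampedSymbol (3 / 2 + δ) (2 ^ (j : ℝ)) a (dS r₁ r₂ s))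
        (2 * sin ((φ + π) / 2) ^ 2) s +
      ((sin (φ + π) / (s ^ 2 / 2 + 2 * sin ((φ + π) / 2) ^ 2) : ℝ) : ℂ) *
        (dampedSymbol (3 / 2 + δ) (2 ^ (j : ℝ)) a (r₁ + r₂) -
          (((r₁ + r₂) ^ (-(3 / 2 + δ)) : ℝ) : ℂ) * a (2 ^ (j : ℝ) * (r₁ + r₂))) := by
  simp only [psi3, psi3m, singularDiff, dampedSymbol, cosh_sub_cos, mul_zero, cosh_zero, one_smul,
    dS_zero h₁ h₂, rpow_neg zero_le_two, Complex.real_smul, Complex.ofReal_mul,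
    Complex.ofReal_div, Complex.ofReal_inv, Complex.ofReal_sin]
  ring

lemma isAmplitude_singularDiff_cosh_smul_comp_dS (hA : HasSymbolBoundsOn A K (Ici R₀))
    (h₁ : 0 < r₁) (h₂ : 0 < r₂) (hR : R₀ ≤ r₁ + r₂) (hα : |α| < 1) {B : ℝ} (hB : 0 ≤ B) :
    IsAmplitude (singularDiff (fun s ↦ cosh (α * s) • A (dS r₁ r₂ s)) B)
      ((4 * (64 / (1 - |α|) ^ 4) + 16) * (2 * K)) := by
  refine isAmplitude_singularDiff
    (fun s _ ↦ (hasDerivAt_cosh_smul_comp_dS hA h₁ h₂ hR α s).differentiableAt) ?_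
    (fun s hs ↦ norm_deriv_cosh_smul_comp_dS_le hA h₁ h₂ hR hα.le hs) hα hB
  rw [mul_zero, cosh_zero, one_smul, dS_zero h₁.le h₂.le]
  exact (hA.norm_le _ hR).trans (by linarith [hA.nonneg ⟨_, hR⟩])

lemma norm_integral_exp_mul_sin_div_mul_le (Φ : ℝ → ℝ) (ϑ : ℝ) (c : ℂ) :
    ‖∫ s in Ioi (0 : ℝ), Complex.exp (Complex.I * (Φ s : ℂ)) *
      (((sin ϑ / (s ^ 2 / 2 + 2 * sin (ϑ / 2) ^ 2) : ℝ) : ℂ) * c)‖ ≤ π * ‖c‖ := by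
  refine (norm_integral_le_integral_norm _).trans ?_
  simp_rw [norm_exp_I_mul_mul, norm_mul, Complex.norm_real, norm_eq_abs]
  rw [integral_mul_const]
  gcongr
  exact integral_Ioi_abs_sin_div_sq_div_two_add_le ϑ

lemma inv_le_one_add_mul_rpow (h₁ : 0 ≤ r₁) (h₂ : 0 ≤ r₂) (hlam : 1 ≤ lam) :
    lam⁻¹ ≤ (1 + (r₁ + r₂)) * (1 + lam * r₁ * r₂) ^ (-(1 : ℝ) / 2) := by
  have hsq : 1 + lam * r₁ * r₂ ≤ (lam * (1 + (r₁ + r₂))) ^ 2 := by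
    have hprod : 1 + r₁ * r₂ ≤ (1 + (r₁ + r₂)) ^ 2 := by nlinarith [mul_nonneg h₁ h₂]
    nlinarith [mul_nonneg h₁ h₂, mul_le_mul_of_nonneg_left hprod (sq_nonneg lam)]
  calc lam⁻¹ = (1 + (r₁ + r₂)) * ((lam * (1 + (r₁ + r₂))) ^ 2) ^ (-(1 : ℝ) / 2) := by
        rw [← rpow_natCast_mul (by positivity),
          show ((2 : ℕ) : ℝ) * (-(1 : ℝ) / 2) = -1 by norm_num, rpow_neg_one]
        field_simp
    _ ≤ (1 + (r₁ + r₂)) * (1 + lam * r₁ * r₂) ^ (-(1 : ℝ) / 2) := by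
        gcongr ?_ * ?_
        exact rpow_le_rpow_of_nonpos (by positivity) hsq (by norm_num)

lemma IsAmplitude.norm_integral_exp_dS_mul_add_le {ψ : ℝ → ℂ} (hψ : IsAmplitude ψ K)
    (h₁ : 0 < r₁) (h₂ : 0 < r₂) (hlam : 0 < lam) (ϑ : ℝ) (c : ℂ) :
    ‖∫ s in Ioi (0 : ℝ), Complex.exp (Complex.I * ((lam * dS r₁ r₂ s : ℝ) : ℂ)) *
        ((sin ϑ : ℂ) * ψ s + ((sin ϑ / (s ^ 2 / 2 + 2 * sin (ϑ / 2) ^ 2) : ℝ) : ℂ) * c)‖ ≤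
      (4 * (r₁ + r₂) + 2) * K * (1 + lam * r₁ * r₂) ^ (-(1 : ℝ) / 2) + π * ‖c‖ := by
  have hphase : ContinuousOn (fun s ↦ lam * dS r₁ r₂ s) (Ioi 0) :=
    ((continuous_dS r₁ r₂).const_mul lam).continuousOn
  have hpoisson : IntegrableOn
      (fun s ↦ ((sin ϑ / (s ^ 2 / 2 + 2 * sin (ϑ / 2) ^ 2) : ℝ) : ℂ) * c) (Ioi 0) :=
    ((integrable_sin_div_sq_div_two_add ϑ).ofReal.mul_const c).integrableOn
  simp_rw [mul_add (Complex.exp _), mul_left_comm _ (sin ϑ : ℂ)]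
  rw [integral_add
    ((integrableOn_exp_I_mul_mul hphase measurableSet_Ioi hψ.integrableOn).const_mul _)
    (integrableOn_exp_I_mul_mul hphase measurableSet_Ioi hpoisson), integral_const_mul]
  refine norm_add_le_of_le ?_ (norm_integral_exp_mul_sin_div_mul_le _ ϑ c)
  rw [norm_mul, Complex.norm_real]
  exact (mul_le_of_le_one_left (norm_nonneg _) (abs_sin_le_one ϑ)).trans
    (hψ.norm_integral_exp_dS_mul_le h₁ h₂ hlam)

lemma norm_integral_exp_mul_psi3_sub_psi3m_le (ha : HasSymbolBoundsOn a K (Ioi 0))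
    (hδ : -(3 / 2) ≤ δ) (hα : |α| < 1) (hR₀ : 0 < R₀) (h₁ : 0 < r₁) (h₂ : 0 < r₂)
    (hR : R₀ ≤ r₁ + r₂) (j : ℕ) (φ : ℝ) :
    ‖∫ s in Ioi (0 : ℝ),
        Complex.exp (Complex.I * (((2 : ℝ) ^ (j : ℝ) * dS r₁ r₂ s : ℝ) : ℂ)) *
          (psi3 δ α a j r₁ r₂ φ s - psi3m δ a j r₁ r₂ φ s)‖ ≤
      (4 * (r₁ + r₂) + 2) * ((4 * (64 / (1 - |α|) ^ 4) + 16) *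
        (2 * (2 * ((1 + (3 / 2 + δ)) * R₀ ^ (-(3 / 2 + δ)) * K)))) *
          (1 + 2 ^ (j : ℝ) * r₁ * r₂) ^ (-(1 : ℝ) / 2) +
      π * ((1 + (3 / 2 + δ)) * R₀ ^ (-(3 / 2 + δ)) / R₀ * K * (2 ^ (j : ℝ))⁻¹) := by
  have hp : 0 ≤ 3 / 2 + δ := by linarith
  have hlam : (0 : ℝ) < 2 ^ (j : ℝ) := by positivity
  have hamp := isAmplitude_singularDiff_cosh_smul_comp_dS
    (hasSymbolBoundsOn_dampedSymbol ha hp hlam hR₀) h₁ h₂ hR hα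
    (by positivity : 0 ≤ 2 * sin ((φ + π) / 2) ^ 2)
  simp_rw [psi3_sub_psi3m h₁.le h₂.le]
  refine (hamp.norm_integral_exp_dS_mul_add_le h₁ h₂ hlam (φ + π) _).trans ?_
  gcongr
  exact norm_dampedSymbol_sub_le ha hp hlam hR₀ hR

lemma exists_norm_integral_exp_mul_psi3_sub_psi3m_le (ha : HasSymbolBoundsOn a K (Ioi 0))
    (hδ : -(3 / 2) ≤ δ) (hα : |α| < 1) (hR₀ : 0 < R₀) (R₁ : ℝ) :
    ∃ C, 0 ≤ C ∧ ∀ (j : ℕ) (r₁ r₂ : ℝ), 0 < r₁ → 0 < r₂ → r₁ + r₂ ∈ Icc R₀ R₁ → ∀ φ : ℝ,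
      ‖∫ s in Ioi (0 : ℝ),
          Complex.exp (Complex.I * (((2 : ℝ) ^ (j : ℝ) * dS r₁ r₂ s : ℝ) : ℂ)) *
            (psi3 δ α a j r₁ r₂ φ s - psi3m δ a j r₁ r₂ φ s)‖ ≤
        C * (1 + 2 ^ (j : ℝ) * r₁ * r₂) ^ (-(1 : ℝ) / 2) := by
  have hK : 0 ≤ K := ha.nonneg nonempty_Ioi
  have hp : 0 ≤ 3 / 2 + δ := by linarith
  have : 0 < 1 - |α| := sub_pos.2 hα
  set M := (4 * (64 / (1 - |α|) ^ 4) + 16) *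
    (2 * (2 * ((1 + (3 / 2 + δ)) * R₀ ^ (-(3 / 2 + δ)) * K)))
  set N := (1 + (3 / 2 + δ)) * R₀ ^ (-(3 / 2 + δ)) / R₀ * K
  have : 0 ≤ M := by positivity
  have : 0 ≤ N := by positivity
  refine ⟨(4 * |R₁| + 2) * M + π * N * (1 + |R₁|), by positivity,
    fun j r₁ r₂ h₁ h₂ hR φ ↦ ?_⟩
  have hR' : r₁ + r₂ ≤ |R₁| := hR.2.trans (le_abs_self R₁)
  calc _ ≤ (4 * (r₁ + r₂) + 2) * M * (1 + 2 ^ (j : ℝ) * r₁ * r₂) ^ (-(1 : ℝ) / 2) +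
          π * (N * (2 ^ (j : ℝ))⁻¹) :=
        norm_integral_exp_mul_psi3_sub_psi3m_le ha hδ hα hR₀ h₁ h₂ hR.1 j φ
    _ ≤ (4 * |R₁| + 2) * M * (1 + 2 ^ (j : ℝ) * r₁ * r₂) ^ (-(1 : ℝ) / 2) +
          π * (N * ((1 + |R₁|) * (1 + 2 ^ (j : ℝ) * r₁ * r₂) ^ (-(1 : ℝ) / 2))) := by
        gcongr
        refine (inv_le_one_add_mul_rpow h₁.le h₂.le (one_le_rpow one_le_two j.cast_nonneg)).trans ?_
        gcongr
    _ = ((4 * |R₁| + 2) * M + π * N * (1 + |R₁|)) *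
          (1 + 2 ^ (j : ℝ) * r₁ * r₂) ^ (-(1 : ℝ) / 2) := by ring

end Kernel

theorem stmt9_general {δ : ℝ} (hδ : -(3 / 2) ≤ δ) {a : ℝ → ℂ} {K : ℝ}
    (ha : HasSymbolBoundsOn a K (Ioi 0)) {β : ℝ → ℝ} {M R₀ R₁ : ℝ} (hβ : ∀ r, |β r| ≤ M)
    (hR₀ : 0 < R₀) (hβs : Function.support β ⊆ Icc R₀ R₁) {α : ℝ} (hα : |α| < 1) :
    ∃ C, ∀ (j : ℕ) (r₁ r₂ : ℝ), 0 < r₁ → 0 < r₂ → ∀ φ,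
      ‖Ktil3e δ α a β j r₁ r₂ φ‖ ≤
        C * 2 ^ (-(j : ℝ) * (3 / 2 + δ)) * (1 + 2 ^ (j : ℝ) * r₁ * r₂) ^ (-(1 : ℝ) / 2) := by
  obtain ⟨C, hC0, hC⟩ := exists_norm_integral_exp_mul_psi3_sub_psi3m_le ha hδ hα hR₀ R₁
  have hM : 0 ≤ M := (abs_nonneg _).trans (hβ 0)
  refine ⟨M * C, fun j r₁ r₂ h₁ h₂ φ ↦ ?_⟩
  rw [Ktil3e, norm_mul, norm_mul, Complex.norm_real, Complex.norm_real, norm_eq_abs, norm_eq_abs,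
    abs_of_nonneg (by positivity)]
  by_cases hr : β (r₁ + r₂) = 0
  · rw [hr, abs_zero, mul_zero, zero_mul]
    positivity
  · calc _ ≤ 2 ^ (-(j : ℝ) * (3 / 2 + δ)) * M *
          (C * (1 + 2 ^ (j : ℝ) * r₁ * r₂) ^ (-(1 : ℝ) / 2)) := by
          gcongr
          exacts [hβ _, hC j r₁ r₂ h₁ h₂ (hβs hr) φ]
      _ = _ := by ring

theorem stmt9 (δ : ℝ) (hδ : 0 ≤ δ) (a : ℝ → ℂ) (ha : IsSymbol0 a)
    (β : ℝ → ℝ) (hβ : ContDiff ℝ (⊤ : ℕ∞) β)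
    (hβs : Function.support β ⊆ Set.Icc (3 / 8) (4 / 3))
    (α : ℝ) (hα : α ∈ Set.Ioo (-1 : ℝ) 1) (hα0 : α ≠ 0) :
    ∃ C : ℝ, ∀ (j : ℕ), 1 ≤ j → ∀ r₁ r₂ : ℝ, 0 < r₁ → 0 < r₂ →
      ∀ θ₁ ∈ Set.Ico (0 : ℝ) (2 * Real.pi), ∀ θ₂ ∈ Set.Ico (0 : ℝ) (2 * Real.pi),
        ‖Ktil3e δ α a β j r₁ r₂ (θ₁ - θ₂)‖ ≤
          C * (2 : ℝ) ^ (-(j : ℝ) * (3 / 2 + δ)) *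
            (1 + (2 : ℝ) ^ (j : ℝ) * r₁ * r₂) ^ (-(1 : ℝ) / 2) := by
  obtain ⟨K, hK⟩ := ha.exists_hasSymbolBoundsOn
  obtain ⟨M, hM⟩ := hβ.continuous.bounded_above_of_compact_support
    (HasCompactSupport.of_support_subset_isCompact isCompact_Icc hβs)
  obtain ⟨C, hC⟩ := stmt9_general (δ := δ) (by linarith) hK hM (by norm_num) hβs (abs_lt.2 hα)
  exact ⟨C, fun j _ r₁ r₂ h₁ h₂ θ₁ _ θ₂ _ ↦ hC j r₁ r₂ h₁ h₂ (θ₁ - θ₂)⟩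

end
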